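/- Let c ∈ ℝ and let Ψ₁, Ψ₂ : ℝ → ℂ be measurable with Ψ₁ square integrable on ]−∞,c[ and Ψ₂ square integrable on ]c,∞[. Define the kernel R(x,y) := Ψ₁(min(x,y))·Ψ₂(max(x,y)). Then the following are equivalent: (i) there is C ≥ 0 such that |∫∫_{ℝ²} conj(f(x)) R(x,y) g(y) dx dy| ≤ C‖f‖_{L²}‖g‖_{L²} for all f, g ∈ L²(ℝ); (ii) there are C₁, C₂ ≥ 0 such that the same bound with constant C₁ holds for all f, g ∈ L²(ℝ) supported in ]−∞,c[, and with constant C₂ for all f, g ∈ L²(ℝ) supported in ]c,∞[. (The two off-diagonal pieces of R are automatically Hilbert–Schmidt.) -/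

import Mathlib

open Set MeasureTheory

open Function
open scoped ENNReal ComplexConjugate

/-!
On `s × sᶜ` and `sᶜ × s`, where `s = ]-∞,c[`, the kernel is the tensor product of `Ψ₁` and `Ψ₂`
up to order, hence Hilbert–Schmidt, and Cauchy–Schwarz on the product space bounds its
contribution. The only delicate point is that the form is an iterated integral whose inner integral
may diverge on the diagonal pieces. If it diverges over `ℝ` then, the off-diagonal part being
integrable for almost every `x`, it already diverges over the diagonal piece and both integrals are
`0`; so in every case the two inner integrals differ by at most the integral of the absolute value
of the off-diagonal part. If the outer integral diverges, the bound is trivial.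
-/

section ProductIntegrals

variable {α β 𝕜 E : Type*} {mα : MeasurableSpace α} {mβ : MeasurableSpace β}
  {μ : Measure α} {ν : Measure β}

theorem integral_norm_mul_le_eLpNorm_mul_eLpNorm [NormedRing 𝕜] {p q : ℝ≥0∞}
    [p.HolderConjugate q] {f g : α → 𝕜} (hf : MemLp f p μ) (hg : MemLp g q μ) :
    ∫ x, ‖f x * g x‖ ∂μ ≤ (eLpNorm f p μ).toReal * (eLpNorm g q μ).toReal := by
  have hfg : AEStronglyMeasurable (fun x ↦ f x * g x) μ :=
    hf.aestronglyMeasurable.mul hg.aestronglyMeasurable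
  have h_holder : eLpNorm (fun x ↦ f x * g x) 1 μ ≤ eLpNorm f p μ * eLpNorm g q μ := by
    simpa using! eLpNorm_smul_le_mul_eLpNorm (r := 1) hg.aestronglyMeasurable
      hf.aestronglyMeasurable
  rw [integral_norm_eq_lintegral_enorm hfg, ← eLpNorm_one_eq_lintegral_enorm,
    ← ENNReal.toReal_mul]
  exact ENNReal.toReal_mono (ENNReal.mul_ne_top hf.eLpNorm_ne_top hg.eLpNorm_ne_top) h_holder

theorem eLpNorm_mul_prod [NormedDivisionRing 𝕜] [SFinite ν] {p : ℝ≥0∞} (hp : p ≠ ∞)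
    {f : α → 𝕜} {g : β → 𝕜} (hf : AEStronglyMeasurable f μ) (hg : AEStronglyMeasurable g ν) :
    eLpNorm (fun z : α × β ↦ f z.1 * g z.2) p (μ.prod ν) = eLpNorm f p μ * eLpNorm g p ν := by
  rcases eq_or_ne p 0 with rfl | hp₀
  · simp
  simp only [eLpNorm_eq_lintegral_rpow_enorm_toReal hp₀ hp, enorm_mul,
    ENNReal.mul_rpow_of_nonneg _ _ ENNReal.toReal_nonneg]
  rw [lintegral_prod_mul (hf.enorm.pow_const _) (hg.enorm.pow_const _),
    ENNReal.mul_rpow_of_nonneg _ _ (by positivity)]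

theorem memLp_mul_prod [NormedDivisionRing 𝕜] [SFinite ν] {p : ℝ≥0∞} (hp : p ≠ ∞)
    {f : α → 𝕜} {g : β → 𝕜} (hf : MemLp f p μ) (hg : MemLp g p ν) :
    MemLp (fun z : α × β ↦ f z.1 * g z.2) p (μ.prod ν) := by
  refine ⟨hf.aestronglyMeasurable.comp_fst.mul hg.aestronglyMeasurable.comp_snd, ?_⟩
  rw [eLpNorm_mul_prod hp hf.aestronglyMeasurable hg.aestronglyMeasurable]
  exact ENNReal.mul_lt_top hf.eLpNorm_lt_top hg.eLpNorm_lt_top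

theorem quasiMeasurePreserving_of_eq_fst_or_eq_snd [SFinite μ] {h : α × α → α} (hm : Measurable h)
    (h_eq : ∀ z, h z = z.1 ∨ h z = z.2) :
    Measure.QuasiMeasurePreserving h (μ.prod μ) μ := by
  refine ⟨hm, Measure.AbsolutelyContinuous.mk fun N hN hμN ↦ ?_⟩
  rw [Measure.map_apply hm hN]
  refine measure_mono_null (t := Prod.fst ⁻¹' N ∪ Prod.snd ⁻¹' N) (fun z hz ↦ ?_)
    (measure_union_null (Measure.quasiMeasurePreserving_fst.preimage_null hμN)
      (Measure.quasiMeasurePreserving_snd.preimage_null hμN))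
  rcases h_eq z with hz' | hz'
  · exact .inl (by simpa [hz'] using hz)
  · exact .inr (by simpa [hz'] using hz)

variable [NormedAddCommGroup E] [NormedSpace ℝ E]

/- If `f` is not integrable on `t`, both integrals on the left vanish by convention. -/
theorem norm_integral_sub_setIntegral_le_of_integrableOn_compl {f : β → E} {t : Set β}
    (ht : MeasurableSet t) (hf : IntegrableOn f tᶜ ν) :
    ‖∫ y, f y ∂ν - ∫ y in t, f y ∂ν‖ ≤ ∫ y in tᶜ, ‖f y‖ ∂ν := by
  by_cases hft : IntegrableOn f t ν
  · have hfi : Integrable f ν := by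
      simpa using hft.union hf
    rw [← integral_add_compl ht hfi, add_sub_cancel_left]
    exact norm_integral_le_integral_norm f
  · rw [integral_undef fun h ↦ hft h.integrableOn, integral_undef hft, sub_zero, norm_zero]
    positivity

theorem norm_integral_integral_le_add_compl [SFinite μ] [SFinite ν] {K : α → β → E} {t : Set β}
    (ht : MeasurableSet t) (hKt : AEStronglyMeasurable (uncurry K) (μ.prod (ν.restrict t)))
    (hKt' : Integrable (uncurry K) (μ.prod (ν.restrict tᶜ)))
    (hK : Integrable (fun x ↦ ∫ y, K x y ∂ν) μ) :
    ‖∫ x, ∫ y, K x y ∂ν ∂μ‖ ≤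
      ‖∫ x, ∫ y in t, K x y ∂ν ∂μ‖ + ∫ z, ‖uncurry K z‖ ∂μ.prod (ν.restrict tᶜ) := by
  have h_norm : Integrable (fun x ↦ ∫ y in tᶜ, ‖K x y‖ ∂ν) μ := hKt'.integral_norm_prod_left
  have h_diff : ∀ᵐ x ∂μ, ‖∫ y, K x y ∂ν - ∫ y in t, K x y ∂ν‖ ≤ ∫ y in tᶜ, ‖K x y‖ ∂ν := by
    filter_upwards [((integrable_prod_iff hKt'.aestronglyMeasurable).1 hKt').1] with x hx
    exact norm_integral_sub_setIntegral_le_of_integrableOn_compl ht hx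
  have h_sub : Integrable (fun x ↦ ∫ y, K x y ∂ν - ∫ y in t, K x y ∂ν) μ :=
    h_norm.mono' (hK.aestronglyMeasurable.sub hKt.integral_prod_right') h_diff
  have h_int : Integrable (fun x ↦ ∫ y in t, K x y ∂ν) μ := by
    simpa only [Pi.sub_def, sub_sub_cancel] using hK.sub h_sub
  calc ‖∫ x, ∫ y, K x y ∂ν ∂μ‖
      = ‖(∫ x, ∫ y in t, K x y ∂ν ∂μ) + ∫ x, (∫ y, K x y ∂ν - ∫ y in t, K x y ∂ν) ∂μ‖ := by
        rw [integral_sub hK h_int, add_sub_cancel]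
    _ ≤ ‖∫ x, ∫ y in t, K x y ∂ν ∂μ‖ + ‖∫ x, (∫ y, K x y ∂ν - ∫ y in t, K x y ∂ν) ∂μ‖ :=
        norm_add_le _ _
    _ ≤ ‖∫ x, ∫ y in t, K x y ∂ν ∂μ‖ + ∫ x, ∫ y in tᶜ, ‖K x y‖ ∂ν ∂μ := by
        gcongr
        exact norm_integral_le_of_norm_le h_norm h_diff
    _ = _ := by
        rw [integral_prod _ hKt'.norm]
        rfl

end ProductIntegrals

section SesquilinearForm

variable {α β 𝕜 : Type*} {mα : MeasurableSpace α} {mβ : MeasurableSpace β} [RCLike 𝕜]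
  {μ : Measure α} {ν : Measure β}

theorem integrable_conj_mul_mul [SFinite ν] {R : α → β → 𝕜} {f : α → 𝕜} {g : β → 𝕜}
    (hR : MemLp (uncurry R) 2 (μ.prod ν)) (hf : MemLp f 2 μ) (hg : MemLp g 2 ν) :
    Integrable (fun z : α × β ↦ conj (f z.1) * R z.1 z.2 * g z.2) (μ.prod ν) := by
  refine (hR.integrable_mul (memLp_mul_prod ENNReal.ofNat_ne_top hf.star hg)).congr
    (.of_forall fun z ↦ ?_)
  simp [uncurry, mul_left_comm, mul_assoc]

/- Cauchy–Schwarz on the product space, applied to `R` and `conj f ⊗ g`. -/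
theorem integral_norm_conj_mul_mul_le [SFinite ν] {R : α → β → 𝕜} {f : α → 𝕜} {g : β → 𝕜}
    (hR : MemLp (uncurry R) 2 (μ.prod ν)) (hf : MemLp f 2 μ) (hg : MemLp g 2 ν) :
    ∫ z : α × β, ‖conj (f z.1) * R z.1 z.2 * g z.2‖ ∂μ.prod ν ≤
      (eLpNorm (uncurry R) 2 (μ.prod ν)).toReal *
        (eLpNorm f 2 μ).toReal * (eLpNorm g 2 ν).toReal := by
  have h_star : eLpNorm (star f) 2 μ = eLpNorm f 2 μ := eLpNorm_congr_norm_ae (by simp)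
  have h_holder := integral_norm_mul_le_eLpNorm_mul_eLpNorm hR
    (memLp_mul_prod ENNReal.ofNat_ne_top hf.star hg)
  rw [eLpNorm_mul_prod ENNReal.ofNat_ne_top hf.star.aestronglyMeasurable hg.aestronglyMeasurable,
    h_star, ENNReal.toReal_mul, ← mul_assoc] at h_holder
  refine (integral_congr_ae (.of_forall fun z ↦ ?_)).trans_le h_holder
  simp [uncurry, mul_left_comm, mul_assoc]

/-- The sesquilinear form `(f, g) ↦ ∬ conj (f x) R(x, y) g(y)` of the kernel `R` is bounded by
`C ‖f‖₂ ‖g‖₂` for all `L²` functions `f` and `g` supported in `s`. The form is the iterated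
Bochner integral, which is `0` where an integral diverges. -/
def KernelBoundedOn (μ : Measure α) (R : α → α → 𝕜) (s : Set α) (C : ℝ) : Prop :=
  ∀ f g : α → 𝕜, MemLp f 2 μ → MemLp g 2 μ → support f ⊆ s → support g ⊆ s →
    ‖∫ x, ∫ y, conj (f x) * R x y * g y ∂μ ∂μ‖ ≤
      C * (eLpNorm f 2 μ).toReal * (eLpNorm g 2 μ).toReal

namespace KernelBoundedOn

variable {R : α → α → 𝕜} {s t : Set α} {C C₁ C₂ : ℝ} {f g : α → 𝕜}

theorem mono (h : KernelBoundedOn μ R t C) (hst : s ⊆ t) : KernelBoundedOn μ R s C :=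
  fun f g hf hg hfs hgs ↦ h f g hf hg (hfs.trans hst) (hgs.trans hst)

theorem norm_setIntegral_setIntegral_le (h : KernelBoundedOn μ R s C) (hC : 0 ≤ C)
    (hs : MeasurableSet s) (hf : MemLp f 2 μ) (hg : MemLp g 2 μ) :
    ‖∫ x in s, ∫ y in s, conj (f x) * R x y * g y ∂μ ∂μ‖ ≤
      C * (eLpNorm f 2 μ).toReal * (eLpNorm g 2 μ).toReal := by
  have h_ind : ∫ x, ∫ y, conj (s.indicator f x) * R x y * s.indicator g y ∂μ ∂μ =
      ∫ x in s, ∫ y in s, conj (f x) * R x y * g y ∂μ ∂μ := by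
    simp_rw [← integral_indicator hs]
    refine integral_congr_ae (.of_forall fun x ↦ ?_)
    by_cases hx : x ∈ s <;> simp [hx, indicator_mul_right]
  rw [← h_ind]
  refine (h _ _ (hf.indicator hs) (hg.indicator hs) support_indicator_subset
    support_indicator_subset).trans ?_
  gcongr
  exacts [hf.eLpNorm_ne_top, eLpNorm_indicator_le f, hg.eLpNorm_ne_top, eLpNorm_indicator_le g]

theorem norm_setIntegral_integral_le [SFinite μ] (h : KernelBoundedOn μ R s C) (hC : 0 ≤ C)
    (hs : MeasurableSet s) (hts : t =ᵐ[μ] (sᶜ : Set α))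
    (hR : AEStronglyMeasurable (uncurry R) (μ.prod μ))
    (hRst : MemLp (uncurry R) 2 ((μ.restrict s).prod (μ.restrict t)))
    (hf : MemLp f 2 μ) (hg : MemLp g 2 μ)
    (h_int : Integrable (fun x ↦ ∫ y, conj (f x) * R x y * g y ∂μ) μ) :
    ‖∫ x in s, ∫ y, conj (f x) * R x y * g y ∂μ ∂μ‖ ≤
      (C + (eLpNorm (uncurry R) 2 ((μ.restrict s).prod (μ.restrict t))).toReal) *
        (eLpNorm f 2 μ).toReal * (eLpNorm g 2 μ).toReal := by
  rw [Measure.restrict_congr_set hts] at hRst ⊢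
  have h_meas : AEStronglyMeasurable (uncurry fun x y ↦ conj (f x) * R x y * g y)
      ((μ.restrict s).prod (μ.restrict s)) := by
    rw [Measure.prod_restrict]
    exact ((hf.star.aestronglyMeasurable.comp_fst.mul hR).mul
      hg.aestronglyMeasurable.comp_snd).restrict
  have h_off : ∫ z : α × α, ‖conj (f z.1) * R z.1 z.2 * g z.2‖
        ∂(μ.restrict s).prod (μ.restrict sᶜ) ≤
      (eLpNorm (uncurry R) 2 ((μ.restrict s).prod (μ.restrict sᶜ))).toReal *
        (eLpNorm f 2 μ).toReal * (eLpNorm g 2 μ).toReal := by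
    refine (integral_norm_conj_mul_mul_le hRst (hf.restrict s) (hg.restrict sᶜ)).trans ?_
    gcongr
    exacts [hf.eLpNorm_ne_top, Measure.restrict_le_self, hg.eLpNorm_ne_top,
      Measure.restrict_le_self]
  rw [add_mul, add_mul]
  exact (norm_integral_integral_le_add_compl hs h_meas
    (integrable_conj_mul_mul hRst (hf.restrict s) (hg.restrict sᶜ)) h_int.integrableOn).trans
    (add_le_add (h.norm_setIntegral_setIntegral_le hC hs hf hg) h_off)

theorem univ_of_ae_eq_compl [SFinite μ] (hs : MeasurableSet s) (ht : MeasurableSet t)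
    (hts : t =ᵐ[μ] (sᶜ : Set α)) (hR : AEStronglyMeasurable (uncurry R) (μ.prod μ))
    (hRst : MemLp (uncurry R) 2 ((μ.restrict s).prod (μ.restrict t)))
    (hRts : MemLp (uncurry R) 2 ((μ.restrict t).prod (μ.restrict s)))
    (hC₁ : 0 ≤ C₁) (hC₂ : 0 ≤ C₂)
    (h₁ : KernelBoundedOn μ R s C₁) (h₂ : KernelBoundedOn μ R t C₂) :
    KernelBoundedOn μ R univ
      (C₁ + (eLpNorm (uncurry R) 2 ((μ.restrict s).prod (μ.restrict t))).toReal +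
        (C₂ + (eLpNorm (uncurry R) 2 ((μ.restrict t).prod (μ.restrict s))).toReal)) := by
  intro f g hf hg _ _
  by_cases h_int : Integrable (fun x ↦ ∫ y, conj (f x) * R x y * g y ∂μ) μ
  · have hst : s =ᵐ[μ] (tᶜ : Set α) := by simpa only [compl_compl] using hts.compl.symm
    rw [← integral_add_compl hs h_int, ← setIntegral_congr_set hts, add_mul, add_mul]
    exact norm_add_le_of_le
      (h₁.norm_setIntegral_integral_le hC₁ hs hts hR hRst hf hg h_int)
      (h₂.norm_setIntegral_integral_le hC₂ ht hst hR hRts hf hg h_int)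
  · rw [integral_undef h_int, norm_zero]
    positivity

end KernelBoundedOn

theorem exists_kernelBoundedOn_univ_iff [SFinite μ] {R : α → α → 𝕜} {s t : Set α}
    (hs : MeasurableSet s) (ht : MeasurableSet t) (hts : t =ᵐ[μ] (sᶜ : Set α))
    (hR : AEStronglyMeasurable (uncurry R) (μ.prod μ))
    (hRst : MemLp (uncurry R) 2 ((μ.restrict s).prod (μ.restrict t)))
    (hRts : MemLp (uncurry R) 2 ((μ.restrict t).prod (μ.restrict s))) :
    (∃ C, 0 ≤ C ∧ KernelBoundedOn μ R univ C) ↔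
      ∃ C₁ C₂, 0 ≤ C₁ ∧ 0 ≤ C₂ ∧ KernelBoundedOn μ R s C₁ ∧ KernelBoundedOn μ R t C₂ where
  mp := fun ⟨C, hC, h⟩ ↦
    ⟨C, C, hC, hC, h.mono (subset_univ s), h.mono (subset_univ t)⟩
  mpr := fun ⟨_, _, hC₁, hC₂, h₁, h₂⟩ ↦
    ⟨_, by positivity, .univ_of_ae_eq_compl hs ht hts hR hRst hRts hC₁ hC₂ h₁ h₂⟩

end SesquilinearForm

section MinMaxKernel

variable {α 𝕜 : Type*} [LinearOrder α] {Ψ₁ Ψ₂ : α → 𝕜} {c : α}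

/-- The kernel `R(x, y) = Ψ₁(min x y) Ψ₂(max x y)`, the shape of the Green's functions of
Sturm–Liouville operators. -/
def minMaxKernel [Mul 𝕜] (Ψ₁ Ψ₂ : α → 𝕜) (x y : α) : 𝕜 :=
  Ψ₁ (min x y) * Ψ₂ (max x y)

theorem minMaxKernel_of_le [Mul 𝕜] {x y : α} (h : x ≤ y) :
    minMaxKernel Ψ₁ Ψ₂ x y = Ψ₁ x * Ψ₂ y := by
  rw [minMaxKernel, min_eq_left h, max_eq_right h]

theorem minMaxKernel_comm [Mul 𝕜] (x y : α) :
    minMaxKernel Ψ₁ Ψ₂ x y = minMaxKernel Ψ₁ Ψ₂ y x := by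
  rw [minMaxKernel, minMaxKernel, min_comm, max_comm]

variable [TopologicalSpace α] [OrderClosedTopology α] [MeasurableSpace α]
  [OpensMeasurableSpace α] {μ : Measure α} [SFinite μ]

theorem aestronglyMeasurable_uncurry_minMaxKernel [SecondCountableTopology α] [Mul 𝕜]
    [TopologicalSpace 𝕜] [ContinuousMul 𝕜] (hΨ₁ : AEStronglyMeasurable Ψ₁ μ)
    (hΨ₂ : AEStronglyMeasurable Ψ₂ μ) :
    AEStronglyMeasurable (uncurry (minMaxKernel Ψ₁ Ψ₂)) (μ.prod μ) :=
  (hΨ₁.comp_quasiMeasurePreserving (quasiMeasurePreserving_of_eq_fst_or_eq_snd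
      (measurable_fst.min measurable_snd) fun z ↦ min_choice z.1 z.2)).mul
    (hΨ₂.comp_quasiMeasurePreserving (quasiMeasurePreserving_of_eq_fst_or_eq_snd
      (measurable_fst.max measurable_snd) fun z ↦ max_choice z.1 z.2))

theorem memLp_minMaxKernel_Iio_prod_Ioi [NormedDivisionRing 𝕜] {p : ℝ≥0∞} (hp : p ≠ ∞)
    (hΨ₁ : MemLp Ψ₁ p (μ.restrict (Iio c))) (hΨ₂ : MemLp Ψ₂ p (μ.restrict (Ioi c))) :
    MemLp (uncurry (minMaxKernel Ψ₁ Ψ₂)) p ((μ.restrict (Iio c)).prod (μ.restrict (Ioi c))) := by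
  refine (memLp_congr_ae ?_).1 (memLp_mul_prod hp hΨ₁ hΨ₂)
  rw [Measure.prod_restrict]
  filter_upwards [ae_restrict_mem (measurableSet_Iio.prod measurableSet_Ioi)] with z hz
  exact (minMaxKernel_of_le (hz.1.trans hz.2).le).symm

theorem memLp_minMaxKernel_Ioi_prod_Iio [NormedDivisionRing 𝕜] {p : ℝ≥0∞} (hp : p ≠ ∞)
    (hΨ₁ : MemLp Ψ₁ p (μ.restrict (Iio c))) (hΨ₂ : MemLp Ψ₂ p (μ.restrict (Ioi c))) :
    MemLp (uncurry (minMaxKernel Ψ₁ Ψ₂)) p ((μ.restrict (Ioi c)).prod (μ.restrict (Iio c))) := by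
  have h_swap : uncurry (minMaxKernel Ψ₁ Ψ₂) = uncurry (minMaxKernel Ψ₁ Ψ₂) ∘ Prod.swap :=
    funext fun z ↦ minMaxKernel_comm z.1 z.2
  rw [h_swap]
  exact (memLp_minMaxKernel_Iio_prod_Ioi hp hΨ₁ hΨ₂).comp_measurePreserving
    Measure.measurePreserving_swap

theorem kernel_bounded_iff_diagonal_pieces_bounded_general [SecondCountableTopology α] [RCLike 𝕜]
    (hc : μ {c} = 0) (hΨ₁m : AEStronglyMeasurable Ψ₁ μ) (hΨ₂m : AEStronglyMeasurable Ψ₂ μ)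
    (hΨ₁ : MemLp Ψ₁ 2 (μ.restrict (Iio c))) (hΨ₂ : MemLp Ψ₂ 2 (μ.restrict (Ioi c))) :
    (∃ C, 0 ≤ C ∧ KernelBoundedOn μ (minMaxKernel Ψ₁ Ψ₂) univ C) ↔
      ∃ C₁ C₂, 0 ≤ C₁ ∧ 0 ≤ C₂ ∧ KernelBoundedOn μ (minMaxKernel Ψ₁ Ψ₂) (Iio c) C₁ ∧
        KernelBoundedOn μ (minMaxKernel Ψ₁ Ψ₂) (Ioi c) C₂ := by
  have h_compl : Ioi c =ᵐ[μ] ((Iio c)ᶜ : Set α) := by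
    rw [compl_Iio]
    exact Ioi_ae_eq_Ici' hc
  exact exists_kernelBoundedOn_univ_iff measurableSet_Iio measurableSet_Ioi h_compl
    (aestronglyMeasurable_uncurry_minMaxKernel hΨ₁m hΨ₂m)
    (memLp_minMaxKernel_Iio_prod_Ioi ENNReal.ofNat_ne_top hΨ₁ hΨ₂)
    (memLp_minMaxKernel_Ioi_prod_Iio ENNReal.ofNat_ne_top hΨ₁ hΨ₂)

end MinMaxKernel

/-- for a kernel `R(x,y) = Ψ₁(min x y) · Ψ₂(max x y)` with `Ψ₁ ∈ L²(]-∞,c[)`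
and `Ψ₂ ∈ L²(]c,∞[)`, boundedness of the associated bilinear form on `L²(ℝ)` is equivalent
to boundedness on functions supported in `]-∞,c[` and in `]c,∞[` respectively. -/
theorem kernel_bounded_iff_diagonal_pieces_bounded
    (c : ℝ) (Ψ₁ Ψ₂ : ℝ → ℂ) (hΨ₁m : Measurable Ψ₁) (hΨ₂m : Measurable Ψ₂)
    (hΨ₁ : MemLp Ψ₁ 2 (volume.restrict (Iio c)))
    (hΨ₂ : MemLp Ψ₂ 2 (volume.restrict (Ioi c)))
    (R : ℝ → ℝ → ℂ) (hR : ∀ x y : ℝ, R x y = Ψ₁ (min x y) * Ψ₂ (max x y)) :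
    (∃ C : ℝ, 0 ≤ C ∧ ∀ f g : ℝ → ℂ, MemLp f 2 (volume : Measure ℝ) →
        MemLp g 2 (volume : Measure ℝ) →
        ‖∫ x : ℝ, ∫ y : ℝ, (starRingEnd ℂ) (f x) * R x y * g y‖ ≤
          C * (eLpNorm f 2 (volume : Measure ℝ)).toReal *
            (eLpNorm g 2 (volume : Measure ℝ)).toReal) ↔
    (∃ C₁ C₂ : ℝ, 0 ≤ C₁ ∧ 0 ≤ C₂ ∧
      (∀ f g : ℝ → ℂ, MemLp f 2 (volume : Measure ℝ) →
        MemLp g 2 (volume : Measure ℝ) →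
        Function.support f ⊆ Iio c → Function.support g ⊆ Iio c →
        ‖∫ x : ℝ, ∫ y : ℝ, (starRingEnd ℂ) (f x) * R x y * g y‖ ≤
          C₁ * (eLpNorm f 2 (volume : Measure ℝ)).toReal *
            (eLpNorm g 2 (volume : Measure ℝ)).toReal) ∧
      (∀ f g : ℝ → ℂ, MemLp f 2 (volume : Measure ℝ) →
        MemLp g 2 (volume : Measure ℝ) →
        Function.support f ⊆ Ioi c → Function.support g ⊆ Ioi c →
        ‖∫ x : ℝ, ∫ y : ℝ, (starRingEnd ℂ) (f x) * R x y * g y‖ ≤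
          C₂ * (eLpNorm f 2 (volume : Measure ℝ)).toReal *
            (eLpNorm g 2 (volume : Measure ℝ)).toReal)) := by
  obtain rfl : R = minMaxKernel Ψ₁ Ψ₂ := funext₂ hR
  simpa [KernelBoundedOn] using kernel_bounded_iff_diagonal_pieces_bounded_general
    (measure_singleton c) hΨ₁m.aestronglyMeasurable hΨ₂m.aestronglyMeasurable hΨ₁ hΨ₂
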